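/- Fix n ≥ 0. Let Φ₃(n)⁺ be the (2n+3)×(2n+3) lower-triangular matrix over k[X,Y], with rows and columns indexed 0,…,2n+2, whose only nonzero entries are: (0,0) = z₂z₃; for 0 ≤ j ≤ n: (2j+1, 2j) = −z₂z₄, (2j+1, 2j+1) = z₁z₄; for 1 ≤ j ≤ n: (2j, 2j−2) = z₂z₃, (2j, 2j−1) = −z₁z₃, (2j, 2j) = z₂z₃; and (2n+2, 2n) = z₂z₃, (2n+2, 2n+1) = −z₁z₃, (2n+2, 2n+2) = z₁z₂z₃. Then there exists a (2n+3)×(2n+3) matrix Ψ with entries in k[X,Y] such that Φ₃(n)⁺·Ψ = Ψ·Φ₃(n)⁺ = F·I₂ₙ₊₃. -/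

import Mathlib

/-!
Row operations diagonalize the matrix. Writing `N` and `N'` for the subdiagonal matrices with ones
in the even, respectively odd, rows, one has
`Φ₃(n)⁺ = diag (z₃, z₄, z₃, …) * (1 - N) * (1 - N') * diag (z₂, z₁, …, z₂, z₁, z₁z₂)`.
Since `N` and `N'` square to zero, the middle factors are invertible, so it remains to complete the
two diagonal factors to factorizations of `z₃z₄` and of `z₁z₂`.
-/

section MatrixFactorization

open Matrix

variable {R m n p : Type*} [CommRing R] [Fintype m] [DecidableEq m] [Fintype n] [DecidableEq n]
  [Fintype p] [DecidableEq p]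

/-- The pair `(A, B)` is a matrix factorization of the scalar `f`. The matrices are allowed to be
rectangular. -/
structure IsMatrixFactorization (f : R) (A : Matrix m n R) (B : Matrix n m R) : Prop where
  mul_eq_smul_one : A * B = f • (1 : Matrix m m R)
  mul_eq_smul_one' : B * A = f • (1 : Matrix n n R)

namespace IsMatrixFactorization

theorem mul {f g : R} {A : Matrix m n R} {A' : Matrix n m R} {B : Matrix n p R}
    {B' : Matrix p n R} (hA : IsMatrixFactorization f A A') (hB : IsMatrixFactorization g B B') :
    IsMatrixFactorization (f * g) (A * B) (B' * A') where
  mul_eq_smul_one := calc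
    A * B * (B' * A') = A * (B * B') * A' := by simp only [Matrix.mul_assoc]
    _ = g • (A * A') := by simp [hB.mul_eq_smul_one]
    _ = (f * g) • 1 := by rw [hA.mul_eq_smul_one, smul_smul, mul_comm]
  mul_eq_smul_one' := calc
    B' * A' * (A * B) = B' * (A' * A) * B := by simp only [Matrix.mul_assoc]
    _ = f • (B' * B) := by simp [hA.mul_eq_smul_one']
    _ = (f * g) • 1 := by rw [hB.mul_eq_smul_one', smul_smul]

theorem diagonal {f : R} {d d' : m → R} (h : ∀ i, d i * d' i = f) :
    IsMatrixFactorization f (Matrix.diagonal d) (Matrix.diagonal d') where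
  mul_eq_smul_one := by simp only [diagonal_mul_diagonal, h, smul_one_eq_diagonal]
  mul_eq_smul_one' := by
    simp only [diagonal_mul_diagonal, mul_comm (d' _), h, smul_one_eq_diagonal]

theorem one_sub_one_add {N : Matrix m m R} (h : N * N = 0) :
    IsMatrixFactorization 1 (1 - N) (1 + N) where
  mul_eq_smul_one := by simp [sub_mul, mul_add, h]
  mul_eq_smul_one' := by simp [add_mul, mul_sub, h]

end IsMatrixFactorization

end MatrixFactorization

section Subdiagonal

open Matrix

variable {R : Type*} {m : ℕ}

/-- The `m × m` matrix whose only nonzero entries lie just below the diagonal, the one in row `i`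
being `c i`. The weights are indexed by `ℕ` to avoid arithmetic in `Fin m`, and `c 0` is ignored. -/
def subdiagonal [Zero R] (m : ℕ) (c : ℕ → R) : Matrix (Fin m) (Fin m) R :=
  of fun i j => if (i : ℕ) = j + 1 then c i else 0

theorem subdiagonal_mul_subdiagonal_apply [NonUnitalNonAssocSemiring R] (c d : ℕ → R)
    (i j : Fin m) :
    (subdiagonal m c * subdiagonal m d) i j =
      if (i : ℕ) = j + 2 then c (j + 2) * d (j + 1) else 0 := by
  simp only [subdiagonal, mul_apply, of_apply, ite_zero_mul_ite_zero]
  split_ifs with hij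
  · rw [Finset.sum_eq_single ⟨j + 1, by omega⟩
      (fun l _ hl => if_neg fun h => hl (Fin.ext h.2)) (by simp)]
    simp [hij]
  · exact Finset.sum_eq_zero fun l _ => if_neg (by omega)

theorem subdiagonal_mul_self_eq_zero [NonUnitalNonAssocSemiring R] {c : ℕ → R}
    (h : ∀ i, c (i + 1) * c i = 0) : subdiagonal m c * subdiagonal m c = 0 := by
  ext i j
  simp [subdiagonal_mul_subdiagonal_apply, h]

theorem one_sub_subdiagonal_mul_one_sub_subdiagonal_apply [Ring R] (c d : ℕ → R) (i j : Fin m) :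
    ((1 - subdiagonal m c) * (1 - subdiagonal m d)) i j =
      if (i : ℕ) = j then 1
      else if (i : ℕ) = j + 1 then -(c i + d i)
      else if (i : ℕ) = j + 2 then c (j + 2) * d (j + 1)
      else 0 := by
  rw [sub_mul, mul_sub, mul_sub, Matrix.one_mul, Matrix.mul_one, Matrix.one_mul]
  simp only [Matrix.sub_apply, subdiagonal_mul_subdiagonal_apply]
  simp only [subdiagonal, of_apply, one_apply, Fin.ext_iff]
  split_ifs <;> first | omega | abel

end Subdiagonal

section Alternating

variable {R : Type*}

/-- The sequence `a, b, a, b, …`, for weights that depend only on the parity of the row. -/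
def alternating (a b : R) (i : ℕ) : R :=
  if i % 2 = 0 then a else b

theorem alternating_mul_alternating_swap [CommMagma R] (a b : R) (i : ℕ) :
    alternating a b i * alternating b a i = a * b := by
  unfold alternating
  split_ifs
  exacts [rfl, mul_comm b a]

theorem alternating_succ (a b : R) (i : ℕ) : alternating a b (i + 1) = alternating b a i := by
  unfold alternating
  split_ifs <;> first | rfl | omega

theorem IsMatrixFactorization.one_sub_one_add_subdiagonal_alternating [CommRing R] (m : ℕ)
    {a b : R} (h : a * b = 0) :
    IsMatrixFactorization 1 (1 - subdiagonal m (alternating a b))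
      (1 + subdiagonal m (alternating a b)) :=
  .one_sub_one_add <| subdiagonal_mul_self_eq_zero fun i => by
    rw [alternating_succ, alternating_mul_alternating_swap, mul_comm, h]

end Alternating

section PhiThreePlus

open Matrix

variable {R : Type*} [CommRing R]

/-- The matrix of relations `Φ₃(n)⁺` of `M₃(n)⁺`, with arbitrary elements of a commutative ring in
place of the linear forms `z₁, …, z₄`. -/
def phiThreePlus (z1 z2 z3 z4 : R) (n : ℕ) : Matrix (Fin (2 * n + 3)) (Fin (2 * n + 3)) R :=
  of fun i j =>
    if i.val = 0 then (if j.val = 0 then z2 * z3 else 0)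
    else if i.val % 2 = 1 then
      (if j.val = i.val - 1 then -(z2 * z4)
       else if j.val = i.val then z1 * z4 else 0)
    else if i.val = 2 * n + 2 then
      (if j.val = i.val - 2 then z2 * z3
       else if j.val = i.val - 1 then -(z1 * z3)
       else if j.val = i.val then z1 * z2 * z3 else 0)
    else
      (if j.val = i.val - 2 then z2 * z3
       else if j.val = i.val - 1 then -(z1 * z3)
       else if j.val = i.val then z2 * z3 else 0)

theorem phiThreePlus_eq_mul (z1 z2 z3 z4 : R) (n : ℕ) :
    phiThreePlus z1 z2 z3 z4 n =
      diagonal (fun i : Fin (2 * n + 3) => alternating z3 z4 i) *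
        ((1 - subdiagonal (2 * n + 3) (alternating 1 0)) *
          (1 - subdiagonal (2 * n + 3) (alternating 0 1))) *
        diagonal fun i : Fin (2 * n + 3) =>
          Function.update (alternating z2 z1) (2 * n + 2) (z1 * z2) i := by
  ext i j
  rw [mul_diagonal, diagonal_mul, one_sub_subdiagonal_mul_one_sub_subdiagonal_apply]
  simp only [phiThreePlus, of_apply, alternating, Function.update_apply]
  have hband : (i : ℕ) = j ∨ (i : ℕ) = j + 1 ∨ (i : ℕ) = j + 2 ∨
      (i : ℕ) ≠ j ∧ (i : ℕ) ≠ j + 1 ∧ (i : ℕ) ≠ j + 2 := by omega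
  obtain hij | hij | hij | hij := hband <;> grind

theorem stmt_14_general (z1 z2 z3 z4 : R) (n : ℕ) :
    ∃ Ψ, IsMatrixFactorization (z1 * z2 * z3 * z4) (phiThreePlus z1 z2 z3 z4 n) Ψ := by
  have hD : IsMatrixFactorization (z3 * z4)
      (diagonal fun i : Fin (2 * n + 3) => alternating z3 z4 i)
      (diagonal fun i => alternating z4 z3 i) :=
    .diagonal fun i => alternating_mul_alternating_swap z3 z4 i
  have hN := IsMatrixFactorization.one_sub_one_add_subdiagonal_alternating (2 * n + 3)
    (mul_zero (1 : R))
  have hN' := IsMatrixFactorization.one_sub_one_add_subdiagonal_alternating (2 * n + 3)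
    (zero_mul (1 : R))
  have hE : IsMatrixFactorization (z1 * z2)
      (diagonal fun i : Fin (2 * n + 3) =>
        Function.update (alternating z2 z1) (2 * n + 2) (z1 * z2) i)
      (diagonal fun i => Function.update (alternating z1 z2) (2 * n + 2) 1 i) :=
    .diagonal fun i => by
      by_cases hi : (i : ℕ) = 2 * n + 2
      · simp only [hi, Function.update_self, mul_one]
      · rw [Function.update_of_ne hi, Function.update_of_ne hi, mul_comm,
          alternating_mul_alternating_swap]
  have hF : z1 * z2 * z3 * z4 = z3 * z4 * (1 * 1) * (z1 * z2) := by ring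
  rw [phiThreePlus_eq_mul, hF]
  exact ⟨_, (hD.mul (hN.mul hN')).mul hE⟩

end PhiThreePlus

/-- For `n ≥ 0`, the `(2n+3)×(2n+3)` matrix of relations `Φ₃(n)⁺` of `M₃(n)⁺` is
part of a matrix factorization of `F`. -/
theorem stmt_14 {k : Type*} [Field k] (lam : k) (h0 : lam ≠ 0) (h1 : lam ≠ 1)
    (z1 z2 z3 z4 F : MvPolynomial (Fin 2) k)
    (hz1 : z1 = MvPolynomial.X 1) (hz2 : z2 = MvPolynomial.X 0)
    (hz3 : z3 = MvPolynomial.X 0 - MvPolynomial.X 1)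
    (hz4 : z4 = MvPolynomial.X 0 - MvPolynomial.C lam * MvPolynomial.X 1)
    (hF : F = z1 * z2 * z3 * z4)
    (n : ℕ)
    (Φ : Matrix (Fin (2 * n + 3)) (Fin (2 * n + 3)) (MvPolynomial (Fin 2) k))
    (hΦ : ∀ i j : Fin (2 * n + 3), Φ i j =
      if i.val = 0 then (if j.val = 0 then z2 * z3 else 0)
      else if i.val % 2 = 1 then
        (if j.val = i.val - 1 then -(z2 * z4)
         else if j.val = i.val then z1 * z4 else 0)
      else if i.val = 2 * n + 2 then
        (if j.val = i.val - 2 then z2 * z3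
         else if j.val = i.val - 1 then -(z1 * z3)
         else if j.val = i.val then z1 * z2 * z3 else 0)
      else
        (if j.val = i.val - 2 then z2 * z3
         else if j.val = i.val - 1 then -(z1 * z3)
         else if j.val = i.val then z2 * z3 else 0)) :
    ∃ Ψ : Matrix (Fin (2 * n + 3)) (Fin (2 * n + 3)) (MvPolynomial (Fin 2) k),
      Φ * Ψ = F • (1 : Matrix (Fin (2 * n + 3)) (Fin (2 * n + 3)) (MvPolynomial (Fin 2) k)) ∧
      Ψ * Φ = F • (1 : Matrix (Fin (2 * n + 3)) (Fin (2 * n + 3)) (MvPolynomial (Fin 2) k)) := by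
  subst hF
  obtain rfl : Φ = phiThreePlus z1 z2 z3 z4 n := Matrix.ext hΦ
  obtain ⟨Ψ, hΨ⟩ := stmt_14_general z1 z2 z3 z4 n
  exact ⟨Ψ, hΨ.mul_eq_smul_one, hΨ.mul_eq_smul_one'⟩
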